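/- arXiv:2003.11814 — 3 statements merged into one kernel-verified Lean document; each statement's English description precedes it below -/
import Mathlib

section
/- Let f : ℕ → ℝ be strictly monotone increasing and let n be a natural number. Let x̄ and x̲ be real numbers with 0 < x̲ < x̄. Suppose that for every natural number k with k ≤ n we have f(n)·x̄ + f(n)·x̲ ≤ f(n−k)·x̄ + f(n+k)·x̲. Then f is strictly midpoint convex at n at every scale up to n: for every natural number k with 1 ≤ k ≤ n, 2·f(n) < f(n−k) + f(n+k). -/
section OrderedRing

variable {R : Type*} [Ring R] [LinearOrder R] [IsStrictOrderedRing R]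

theorem two_mul_lt_add_of_mul_add_mul_le {a b c p q : R} (hab : a < b) (hq : 0 ≤ q) (hqp : q < p)
    (h : b * p + b * q ≤ a * p + c * q) : 2 * b < a + c := by
  -- Offloading saves `(b - a) * p` on the high-quality side and costs `(c - b) * q` on the other.
  have saving_le_cost : (b - a) * p ≤ (c - b) * q := by
    rwa [sub_mul, sub_mul, sub_le_sub_iff, add_comm (c * q)]
  have scaled_lt : (b - a) * q < (c - b) * q :=
    calc (b - a) * q < (b - a) * p := mul_lt_mul_of_pos_left hqp (sub_pos.mpr hab)
      _ ≤ (c - b) * q := saving_le_cost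
  have increment_lt : b - a < c - b := lt_of_mul_lt_mul_right scaled_lt hq
  rwa [two_mul, add_comm a, ← sub_lt_sub_iff]

theorem stmt_1_general {f : ℕ → R} {n : ℕ} (hf : ∀ m < n, f m < f n) {xbar xlow : R}
    (hx0 : 0 ≤ xlow) (hxx : xlow < xbar)
    (hcp : ∀ k : ℕ, k ≤ n →
      f n * xbar + f n * xlow ≤ f (n - k) * xbar + f (n + k) * xlow) :
    ∀ k : ℕ, 1 ≤ k → k ≤ n → 2 * f n < f (n - k) + f (n + k) := by
  intro k hk hkn
  have hlt : f (n - k) < f n := hf (n - k) (by omega)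
  exact two_mul_lt_add_of_mul_add_mul_le hlt hx0 hxx (hcp k hkn)

end OrderedRing

theorem stmt_1 (f : ℕ → ℝ) (hf : StrictMono f) (n : ℕ) (xbar xlow : ℝ)
    (hx0 : 0 < xlow) (hxx : xlow < xbar)
    (hcp : ∀ k : ℕ, k ≤ n →
      f n * xbar + f n * xlow ≤ f (n - k) * xbar + f (n + k) * xlow) :
    ∀ k : ℕ, 1 ≤ k → k ≤ n →
      2 * f n < f (n - k) + f (n + k) :=
  stmt_1_general (fun _ hm => hf hm) hx0.le hxx hcp
end

section
/- Let f : ℕ → ℝ be given by f(n) = 2^n − 1, let n be a natural number with n ≥ 1, and let x̄, x̲ be real numbers with 0 < x̲ and 0 < x̄. Then the full family of two-worker collusion-proof constraints, namely f(n)·x̄ + f(n)·x̲ ≤ f(n−k)·x̄ + f(n+k)·x̲ for every natural number k with k ≤ n, holds if and only if x̄ ≤ 2·x̲. -/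
/-!
Offloading one more task saves the high-quality worker one marginal cost and charges the low-quality
worker one. For a convex cost profile the saving shrinks and the charge grows with the number of
tasks already offloaded, so if the first task is not worth offloading, none of the later ones is:
the constraint at offload level one implies all the others. For the profile `b ^ m - 1` the two
marginal costs compared at that level are `(b - 1) * b ^ (n - 1)` and `(b - 1) * b ^ n`, whose ratio
is `b`.
-/

section CollusionCost

open scoped fwdDiff

variable {R : Type*} [CommRing R]

/-- The total cost of two workers of qualities `xbar` and `xlow`, each assigned `n` tasks, once the
first has offloaded `k` of them to the second. Only `k ≤ n` is meaningful, since `n - k` is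
truncated. -/
def collusionCost (f : ℕ → R) (n : ℕ) (xbar xlow : R) (k : ℕ) : R :=
  f (n - k) * xbar + f (n + k) * xlow

variable {f : ℕ → R} {n : ℕ} {xbar xlow : R}

theorem collusionCost_succ_sub {k : ℕ} (hk : k < n) :
    collusionCost f n xbar xlow (k + 1) - collusionCost f n xbar xlow k =
      Δ_[1] f (n + k) * xlow - Δ_[1] f (n - (k + 1)) * xbar := by
  have h_remaining : n - (k + 1) + 1 = n - k := by lia
  simp only [collusionCost, fwdDiff, h_remaining, add_assoc]
  ring

section Convex

variable [PartialOrder R] [IsOrderedRing R]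

theorem monotoneOn_collusionCost (hf : Monotone (Δ_[1] f)) (hxbar : 0 ≤ xbar)
    (hxlow : 0 ≤ xlow) (h : collusionCost f n xbar xlow 0 ≤ collusionCost f n xbar xlow 1) :
    MonotoneOn (collusionCost f n xbar xlow) (Set.Iic n) := by
  refine monotoneOn_of_le_add_one Set.ordConnected_Iic fun k _ _ (hk : k < n) ↦ sub_nonneg.mp ?_
  have h_saving : Δ_[1] f (n - (k + 1)) ≤ Δ_[1] f (n - 1) := hf (by lia)
  have h_charge : Δ_[1] f n ≤ Δ_[1] f (n + k) := hf (by lia)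
  calc
    0 ≤ collusionCost f n xbar xlow 1 - collusionCost f n xbar xlow 0 := sub_nonneg.mpr h
    _ = Δ_[1] f n * xlow - Δ_[1] f (n - 1) * xbar :=
      collusionCost_succ_sub (Nat.zero_lt_of_lt hk)
    _ ≤ Δ_[1] f (n + k) * xlow - Δ_[1] f (n - (k + 1)) * xbar := by gcongr
    _ = collusionCost f n xbar xlow (k + 1) - collusionCost f n xbar xlow k :=
      (collusionCost_succ_sub hk).symm

theorem forall_collusionCost_zero_le_iff (hf : Monotone (Δ_[1] f)) (hn : 1 ≤ n)
    (hxbar : 0 ≤ xbar) (hxlow : 0 ≤ xlow) :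
    (∀ k ≤ n, collusionCost f n xbar xlow 0 ≤ collusionCost f n xbar xlow k) ↔
      collusionCost f n xbar xlow 0 ≤ collusionCost f n xbar xlow 1 :=
  ⟨fun h ↦ h 1 hn, fun h k hk ↦
    monotoneOn_collusionCost hf hxbar hxlow h (Nat.zero_le n) hk (Nat.zero_le k)⟩

end Convex

end CollusionCost

section Geometric

open scoped fwdDiff

variable {R : Type*} [CommRing R] {f : ℕ → R} {b : R}

theorem fwdDiff_one_of_eq_pow_sub_one (hf : ∀ m, f m = b ^ m - 1) (m : ℕ) :
    Δ_[1] f m = (b - 1) * b ^ m := by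
  simp only [fwdDiff, hf]
  ring

theorem monotone_fwdDiff_of_eq_pow_sub_one [PartialOrder R] [IsOrderedRing R] (hb : 1 ≤ b)
    (hf : ∀ m, f m = b ^ m - 1) : Monotone (Δ_[1] f) := by
  intro m m' hm
  simp only [fwdDiff_one_of_eq_pow_sub_one hf]
  exact mul_le_mul_of_nonneg_left (pow_le_pow_right₀ hb hm) (sub_nonneg.mpr hb)

variable [LinearOrder R] [IsStrictOrderedRing R] {n : ℕ} {xbar xlow : R}

theorem collusionCost_zero_le_collusionCost_one_iff (hb : 1 < b) (hf : ∀ m, f m = b ^ m - 1)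
    (hn : 1 ≤ n) :
    collusionCost f n xbar xlow 0 ≤ collusionCost f n xbar xlow 1 ↔ xbar ≤ b * xlow := by
  have h_slack : collusionCost f n xbar xlow 1 - collusionCost f n xbar xlow 0 =
      (b - 1) * b ^ (n - 1) * (b * xlow - xbar) := by
    rw [collusionCost_succ_sub hn, fwdDiff_one_of_eq_pow_sub_one hf,
      fwdDiff_one_of_eq_pow_sub_one hf, add_zero, zero_add, ← mul_pow_sub_one (by lia : n ≠ 0) b]
    ring
  have h_pos : 0 < (b - 1) * b ^ (n - 1) :=
    mul_pos (sub_pos.mpr hb) (pow_pos (zero_lt_one.trans hb) _)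
  rw [← sub_nonneg, h_slack, mul_nonneg_iff_of_pos_left h_pos, sub_nonneg]

theorem stmt_4_general (hb : 1 < b) (hf : ∀ m, f m = b ^ m - 1) (hn : 1 ≤ n)
    (hxbar : 0 ≤ xbar) (hxlow : 0 ≤ xlow) :
    (∀ k ≤ n, f n * xbar + f n * xlow ≤ f (n - k) * xbar + f (n + k) * xlow) ↔
      xbar ≤ b * xlow :=
  (forall_collusionCost_zero_le_iff (monotone_fwdDiff_of_eq_pow_sub_one hb.le hf) hn
    hxbar hxlow).trans (collusionCost_zero_le_collusionCost_one_iff hb hf hn)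

end Geometric

theorem stmt_4 (f : ℕ → ℝ) (hf : ∀ n : ℕ, f n = 2 ^ n - 1)
    (n : ℕ) (hn : 1 ≤ n) (xbar xlow : ℝ) (hxl : 0 < xlow) (hxb : 0 < xbar) :
    (∀ k : ℕ, k ≤ n →
      f n * xbar + f n * xlow ≤ f (n - k) * xbar + f (n + k) * xlow) ↔
    xbar ≤ 2 * xlow :=
  stmt_4_general one_lt_two hf hn hxb.le hxl.le
end

section
/- Let f : ℕ → ℝ be strictly monotone increasing and let n be a natural number. Let x̄ and x̲ be real numbers with 0 < x̲ < x̄. Suppose the three-worker collusion-proof constraint for the case of two high-quality workers and one low-quality worker holds: for all natural numbers k₁, k₂ with k₁ ≤ n and k₂ ≤ n, 2·f(n)·x̄ + f(n)·x̲ ≤ f(n−k₁)·x̄ + f(n−k₂)·x̄ + f(n+k₁+k₂)·x̲. Then for every natural number k with 1 ≤ k ≤ n, (f(n) − f(n−k))·x̄ ≤ (f(n+k) − f(n))·x̲, and consequently 2·f(n) < f(n−k) + f(n+k). -/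
section OrderedMul

variable {α : Type*} [Mul α] [Zero α] [Preorder α] [PosMulStrictMono α] [MulPosReflectLT α]

theorem lt_of_mul_le_mul_of_lt_right {a b c d : α} (h : a * d ≤ b * c) (hcd : c < d) (ha : 0 < a)
    (hc : 0 ≤ c) : a < b :=
  lt_of_mul_lt_mul_right ((mul_lt_mul_of_pos_left hcd ha).trans_le h) hc

end OrderedMul

/-- The total cost of two workers of quality `xbar` and one of quality `xlow`, each assigned `n`
tasks, after the first two have offloaded `k₁` and `k₂` tasks to the third. It is meant for
`k₁, k₂ ≤ n`, where the subtractions are not truncated. -/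
def totalCost {R : Type*} [Mul R] [Add R] (f : ℕ → R) (xbar xlow : R) (n k₁ k₂ : ℕ) : R :=
  f (n - k₁) * xbar + f (n - k₂) * xbar + f (n + k₁ + k₂) * xlow

theorem totalCost_zero_zero {R : Type*} [NonAssocSemiring R] (f : ℕ → R) (xbar xlow : R) (n : ℕ) :
    totalCost f xbar xlow n 0 0 = 2 * f n * xbar + f n * xlow := by
  simp only [totalCost, Nat.sub_zero, Nat.add_zero, two_mul, add_mul]

theorem totalCost_zero_le_totalCost_single_iff {R : Type*} [NonUnitalNonAssocRing R]
    [PartialOrder R] [IsOrderedAddMonoid R] (f : ℕ → R) (xbar xlow : R) (n k : ℕ) :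
    totalCost f xbar xlow n 0 0 ≤ totalCost f xbar xlow n k 0 ↔
      (f n - f (n - k)) * xbar ≤ (f (n + k) - f n) * xlow := by
  have cost_diff : totalCost f xbar xlow n k 0 - totalCost f xbar xlow n 0 0 =
      (f (n + k) - f n) * xlow - (f n - f (n - k)) * xbar := by
    simp only [totalCost, Nat.sub_zero, Nat.add_zero, sub_mul]
    abel
  rw [← sub_nonneg, cost_diff, sub_nonneg]

theorem stmt_6_general {R : Type*} [Ring R] [LinearOrder R] [IsStrictOrderedRing R] {f : ℕ → R}
    {n : ℕ} {xbar xlow : R} (hf : ∀ m < n, f m < f n) (hx0 : 0 ≤ xlow) (hxx : xlow < xbar)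
    (hcp : ∀ k ≤ n, totalCost f xbar xlow n 0 0 ≤ totalCost f xbar xlow n k 0) :
    ∀ k : ℕ, 1 ≤ k → k ≤ n →
      (f n - f (n - k)) * xbar ≤ (f (n + k) - f n) * xlow ∧
      2 * f n < f (n - k) + f (n + k) := by
  intro k hk hkn
  have saving_le : (f n - f (n - k)) * xbar ≤ (f (n + k) - f n) * xlow :=
    (totalCost_zero_le_totalCost_single_iff f xbar xlow n k).1 (hcp k hkn)
  have increment_pos : 0 < f n - f (n - k) := sub_pos.2 (hf _ (by lia))
  have increment_lt : f n - f (n - k) < f (n + k) - f n :=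
    lt_of_mul_le_mul_of_lt_right saving_le hxx increment_pos hx0
  refine ⟨saving_le, ?_⟩
  rwa [sub_lt_sub_iff, ← two_mul, add_comm] at increment_lt

theorem stmt_6 (f : ℕ → ℝ) (hf : StrictMono f) (n : ℕ) (xbar xlow : ℝ)
    (hx0 : 0 < xlow) (hxx : xlow < xbar)
    (hcp : ∀ k₁ k₂ : ℕ, k₁ ≤ n → k₂ ≤ n →
      2 * f n * xbar + f n * xlow ≤
        f (n - k₁) * xbar + f (n - k₂) * xbar + f (n + k₁ + k₂) * xlow) :
    ∀ k : ℕ, 1 ≤ k → k ≤ n →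
      (f n - f (n - k)) * xbar ≤ (f (n + k) - f n) * xlow ∧
      2 * f n < f (n - k) + f (n + k) :=
  stmt_6_general (fun _ hm => hf hm) hx0.le hxx fun k hk =>
    (totalCost_zero_zero f xbar xlow n).trans_le (hcp k 0 hk n.zero_le)
end
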